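/- Let C ⊆ F_q^{2n} be a linear code and let p_1(x), q_1(x), p_2(x), q_2(x) ∈ R be such that the row space of the 2n×2n block matrix H = ((P_1, Q_1), (P_2, Q_2)), with P_i, Q_i the circulant matrices generated by p_i(x), q_i(x), equals the symplectic dual C^{⊥s}. Then C^{⊥s} ⊆ C if and only if p_1(x)q̄_1(x) - q_1(x)p̄_1(x) ≡ 0 mod (x^n - 1), p_2(x)q̄_2(x) - q_2(x)p̄_2(x) ≡ 0 mod (x^n - 1), and p_1(x)q̄_2(x) - q_1(x)p̄_2(x) ≡ 0 mod (x^n - 1), where p̄(x) denotes the transpose polynomial of p(x). -/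

import Mathlib

open Polynomial Matrix

noncomputable section

variable {F : Type*} [Field F] {n : ℕ}

/-- The symplectic inner product on `F^{2n}`. -/
def sympForm (u v : (Fin n ⊕ Fin n) → F) : F :=
  (∑ i : Fin n, u (Sum.inl i) * v (Sum.inr i)) -
    ∑ i : Fin n, v (Sum.inl i) * u (Sum.inr i)

lemma sympForm_add_left (u w v : (Fin n ⊕ Fin n) → F) :
    sympForm (u + w) v = sympForm u v + sympForm w v := by
  simp [sympForm, add_mul, mul_add, Finset.sum_add_distrib]
  ring

lemma sympForm_smul_left (c : F) (u v : (Fin n ⊕ Fin n) → F) :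
    sympForm (c • u) v = c * sympForm u v := by
  simp [sympForm, Finset.mul_sum, mul_sub, mul_assoc, mul_left_comm]

/-- The symplectic dual of a subspace of `F^{2n}`. -/
def sympDual (C : Submodule F ((Fin n ⊕ Fin n) → F)) :
    Submodule F ((Fin n ⊕ Fin n) → F) where
  carrier := {u | ∀ v ∈ C, sympForm u v = 0}
  add_mem' := by
    intro a b ha hb v hv
    rw [sympForm_add_left, ha v hv, hb v hv, add_zero]
  zero_mem' := by
    intro v hv
    have : (0 : (Fin n ⊕ Fin n) → F) = (0 : F) • 0 := by simp
    rw [this, sympForm_smul_left, zero_mul]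
  smul_mem' := by
    intro c a ha v hv
    rw [sympForm_smul_left, ha v hv, mul_zero]

/-- The `2n × 2n` symplectic matrix `Ω`. -/
def Omat (F : Type*) [Field F] (n : ℕ) : Matrix (Fin n ⊕ Fin n) (Fin n ⊕ Fin n) F :=
  Matrix.fromBlocks 0 1 (-1) 0

/-- The row space of a matrix. -/
def rowSpace {ι κ : Type*} (M : Matrix ι κ F) : Submodule F (κ → F) :=
  Submodule.span F (Set.range fun i => M i)

lemma monic_xn_sub_one (F : Type*) [Field F] {n : ℕ} (hn : n ≠ 0) :
    (X ^ n - 1 : F[X]).Monic := by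
  simpa using Polynomial.monic_X_pow_sub_C (1 : F) hn

/-- The coefficient vector of the canonical degree `< n` representative of an
element of `R = F[x]/(x^n - 1)`, as an `F`-linear map. -/
def toVecL (hn : n ≠ 0) : AdjoinRoot (X ^ n - 1 : F[X]) →ₗ[F] (Fin n → F) :=
  (LinearMap.pi fun i : Fin n => Polynomial.lcoeff F (i : ℕ)) ∘ₗ
    AdjoinRoot.modByMonicHom (monic_xn_sub_one F hn)

/-- The linear map `r ↦ (r·a, r·b)` from `R` to `F^{2n}`. -/
def QCgen (hn : n ≠ 0) (a b : AdjoinRoot (X ^ n - 1 : F[X])) :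
    AdjoinRoot (X ^ n - 1 : F[X]) →ₗ[F] ((Fin n ⊕ Fin n) → F) :=
  LinearMap.pi (Sum.elim
    (fun i => LinearMap.proj i ∘ₗ toVecL hn ∘ₗ LinearMap.mulRight F a)
    (fun i => LinearMap.proj i ∘ₗ toVecL hn ∘ₗ LinearMap.mulRight F b))

/-- The one-generator quasi-cyclic code of length `2n` and index `2`
generated by `(a(x), b(x))`, as a subspace of `F^{2n}`. -/
def QCcode (hn : n ≠ 0) (a b : AdjoinRoot (X ^ n - 1 : F[X])) :
    Submodule F ((Fin n ⊕ Fin n) → F) :=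
  LinearMap.range (QCgen hn a b)

/-- The element of `R` with coefficient vector `v`. -/
def fromVec (v : Fin n → F) : AdjoinRoot (X ^ n - 1 : F[X]) :=
  AdjoinRoot.mk _ (∑ i : Fin n, Polynomial.C (v i) * X ^ (i : ℕ))

/-- The transpose polynomial `ā(x) = x^n a(x⁻¹) mod (x^n - 1)`. -/
def transposePoly (hn : n ≠ 0) (a : AdjoinRoot (X ^ n - 1 : F[X])) :
    AdjoinRoot (X ^ n - 1 : F[X]) :=
  fromVec (fun i => toVecL hn a (-i))

/-- The cyclic code of length `n` generated by (the image of) `g(x)`. -/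
def cyclicCode (hn : n ≠ 0) (g : F[X]) : Submodule F (Fin n → F) :=
  LinearMap.range (toVecL hn ∘ₗ
    LinearMap.mulRight F (AdjoinRoot.mk (X ^ n - 1 : F[X]) g))

/-- The Hamming weight of a vector. -/
def hWeight {ι : Type*} (u : ι → F) : ℕ := {i | u i ≠ 0}.ncard


lemma aux_neg (u v : (Fin n ⊕ Fin n) → F) : sympForm v u = - sympForm u v := by
  simp only [sympForm]
  ring

/-- The symplectic form as a bilinear form. -/
def auxB (F : Type*) [Field F] (n : ℕ) : LinearMap.BilinForm F ((Fin n ⊕ Fin n) → F) :=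
  LinearMap.mk₂ F sympForm sympForm_add_left sympForm_smul_left
    (fun u v w => by
      rw [aux_neg (v + w) u, sympForm_add_left, aux_neg u v, aux_neg u w]; ring)
    (fun c u v => by
      rw [aux_neg (c • v) u, sympForm_smul_left, aux_neg u v, smul_eq_mul]; ring)

lemma auxB_apply (u v : (Fin n ⊕ Fin n) → F) : auxB F n u v = sympForm u v := rfl

lemma auxB_refl : (auxB F n).IsRefl := by
  intro u v h
  rw [auxB_apply] at *
  rw [aux_neg, h, neg_zero]

lemma auxB_nondeg : (auxB F n).Nondegenerate := by
  have hr : LinearMap.IsRefl (auxB F n) := fun u v h => auxB_refl u v h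
  refine (LinearMap.IsRefl.nondegenerate_iff_separatingLeft hr).mpr ?_
  intro u h
  funext i
  rcases i with i | i
  · have := h (Pi.single (Sum.inr i) 1)
    simpa [auxB_apply, sympForm, Pi.single_apply] using this
  · have := h (Pi.single (Sum.inl i) 1)
    simpa [auxB_apply, sympForm, Pi.single_apply] using this

lemma aux_dual_eq (C : Submodule F ((Fin n ⊕ Fin n) → F)) :
    sympDual C = (auxB F n).orthogonal C := by
  ext u
  rw [LinearMap.BilinForm.mem_orthogonal_iff]
  refine forall₂_congr fun v _ => ?_
  change _ ↔ sympForm v u = 0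
  rw [aux_neg u v, neg_eq_zero]

lemma aux_dual_dual (C : Submodule F ((Fin n ⊕ Fin n) → F)) :
    sympDual (sympDual C) = C := by
  rw [aux_dual_eq, aux_dual_eq, LinearMap.BilinForm.orthogonal_orthogonal auxB_nondeg auxB_refl]

lemma aux_le_iff {ι : Type*} (M : Matrix ι (Fin n ⊕ Fin n) F)
    (C : Submodule F ((Fin n ⊕ Fin n) → F)) (h : rowSpace M = sympDual C) :
    sympDual C ≤ C ↔ ∀ i k, sympForm (M i) (M k) = 0 := by
  have key : sympDual C ≤ C ↔ rowSpace M ≤ sympDual (rowSpace M) := by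
    rw [h, aux_dual_dual]
  rw [key, rowSpace, Submodule.span_le]
  constructor
  · intro H i k
    exact H ⟨i, rfl⟩ (M k) (Submodule.subset_span ⟨k, rfl⟩)
  · rintro H _ ⟨i, rfl⟩ v hv
    change sympForm (M i) v = 0
    induction hv using Submodule.span_induction with
    | mem x hx => obtain ⟨k, rfl⟩ := hx; exact H i k
    | zero => exact map_zero (auxB F n (M i))
    | add x y _ _ hx hy =>
      rw [← auxB_apply] at *
      rw [map_add, hx, hy, add_zero]
    | smul c x _ hx =>
      rw [← auxB_apply] at *
      rw [map_smul, hx, smul_zero]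

lemma aux_root_pow : (AdjoinRoot.root (X ^ n - 1 : F[X])) ^ n = 1 := by
  have h : AdjoinRoot.mk (X ^ n - 1 : F[X]) (X ^ n - 1) = 0 := AdjoinRoot.mk_self
  rw [map_sub, map_pow, map_one, AdjoinRoot.mk_X, sub_eq_zero] at h
  exact h

lemma aux_fromVec (v : Fin n → F) : fromVec v =
    ∑ i : Fin n, AdjoinRoot.of (X ^ n - 1 : F[X]) (v i) *
      AdjoinRoot.root (X ^ n - 1 : F[X]) ^ (i : ℕ) := by
  simp [fromVec, map_sum]

lemma aux_from_to (hn : n ≠ 0) (a : AdjoinRoot (X ^ n - 1 : F[X])) :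
    fromVec (toVecL hn a) = a := by
  conv_rhs => rw [← AdjoinRoot.mk_leftInverse (monic_xn_sub_one F hn) a]
  rw [fromVec]
  congr 1
  have hd : (AdjoinRoot.modByMonicHom (monic_xn_sub_one F hn) a).natDegree < n := by
    obtain ⟨f, rfl⟩ := AdjoinRoot.mk_surjective a
    rw [AdjoinRoot.modByMonicHom_mk]
    have h2 : (X ^ n - 1 : F[X]).natDegree = n := by
      simpa using natDegree_X_pow_sub_C (n := n) (r := (1 : F))
    have := natDegree_modByMonic_lt f (monic_xn_sub_one F hn)
      (fun h => by rw [h] at h2; simp at h2; exact hn h2.symm)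
    rwa [h2] at this
  conv_rhs => rw [as_sum_range_C_mul_X_pow' _ hd]
  rw [← Fin.sum_univ_eq_sum_range (fun i =>
    C ((AdjoinRoot.modByMonicHom (monic_xn_sub_one F hn) a).coeff i) * X ^ i)]
  rfl

lemma aux_to_from (hn : n ≠ 0) (v : Fin n → F) : toVecL hn (fromVec v) = v := by
  funext i
  have h2 : (X ^ n - 1 : F[X]).degree = n := by
    simpa using degree_X_pow_sub_C (Nat.pos_of_ne_zero hn) (1 : F)
  change (AdjoinRoot.modByMonicHom (monic_xn_sub_one F hn) (fromVec v)).coeff i = v i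
  rw [fromVec, AdjoinRoot.modByMonicHom_mk,
    (modByMonic_eq_self_iff (monic_xn_sub_one F hn)).mpr]
  · simp [finsetSum_coeff, coeff_X_pow, Fin.val_eq_val]
  · rw [h2]
    exact degree_sum_fin_lt _

lemma aux_mul [NeZero n] (u v : Fin n → F) :
    fromVec u * fromVec v = fromVec (fun d => ∑ m, u m * v (d - m)) := by
  rw [aux_fromVec, aux_fromVec, aux_fromVec, Finset.sum_mul_sum]
  simp only [map_sum, Finset.sum_mul]
  conv_rhs => rw [Finset.sum_comm]
  refine Finset.sum_congr rfl fun m _ => ?_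
  refine Fintype.sum_equiv (Equiv.addRight m) _ _ fun j => ?_
  have hp : AdjoinRoot.root (X ^ n - 1 : F[X]) ^ ((j + m : Fin n) : ℕ) =
      AdjoinRoot.root (X ^ n - 1 : F[X]) ^ (m : ℕ) *
        AdjoinRoot.root (X ^ n - 1 : F[X]) ^ (j : ℕ) := by
    rw [Fin.val_add, ← pow_add, add_comm (m : ℕ)]
    conv_rhs => rw [← Nat.mod_add_div ((j : ℕ) + m) n, pow_add, pow_mul, aux_root_pow,
      one_pow, mul_one]
  simp only [Equiv.coe_addRight, add_sub_cancel_right, hp, map_mul]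
  ring

lemma aux_toVec_mul [NeZero n] (hn : n ≠ 0) (a b : AdjoinRoot (X ^ n - 1 : F[X])) (d : Fin n) :
    toVecL hn (a * transposePoly hn b) d = ∑ m, toVecL hn a m * toVecL hn b (m - d) := by
  conv_lhs => rw [← aux_from_to hn a, transposePoly, aux_mul, aux_to_from]
  simp

lemma aux_circ [NeZero n] (hn : n ≠ 0) (a b : AdjoinRoot (X ^ n - 1 : F[X])) (i k : Fin n) :
    ∑ j, toVecL hn a (i - j) * toVecL hn b (k - j) =
      toVecL hn (a * transposePoly hn b) (i - k) := by
  rw [aux_toVec_mul]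
  refine Fintype.sum_equiv (Equiv.subLeft i) _ _ fun j => ?_
  simp only [Equiv.subLeft_apply]
  rw [sub_sub_sub_cancel_left]

lemma aux_zero_iff [NeZero n] (hn : n ≠ 0) (a b c d : AdjoinRoot (X ^ n - 1 : F[X])) :
    a * transposePoly hn d - b * transposePoly hn c = 0 ↔
    ∀ i k : Fin n, sympForm
      (Sum.elim (circulant (toVecL hn a) i) (circulant (toVecL hn b) i))
      (Sum.elim (circulant (toVecL hn c) k) (circulant (toVecL hn d) k)) = 0 := by
  have key : ∀ i k : Fin n, sympForm
      (Sum.elim (circulant (toVecL hn a) i) (circulant (toVecL hn b) i))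
      (Sum.elim (circulant (toVecL hn c) k) (circulant (toVecL hn d) k)) =
      toVecL hn (a * transposePoly hn d - b * transposePoly hn c) (i - k) := by
    intro i k
    rw [map_sub, Pi.sub_apply, ← aux_circ, ← aux_circ]
    simp only [sympForm, Sum.elim_inl, Sum.elim_inr, circulant_apply]
    congr 1
    exact Finset.sum_congr rfl fun j _ => mul_comm _ _
  simp only [key]
  constructor
  · intro h i k
    rw [h]; simp
  · intro h
    rw [← aux_from_to hn (a * transposePoly hn d - b * transposePoly hn c)]
    have : toVecL hn (a * transposePoly hn d - b * transposePoly hn c) = 0 := by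
      funext i
      simpa using h i 0
    rw [this]
    simp [fromVec]

/-- Suppose the two-generator QC code `C` has a parity-check
matrix `H = ((P₁, Q₁), (P₂, Q₂))`, built from the circulant matrices of
`p₁, q₁, p₂, q₂`, whose row space is `C^{⊥s}`. Then `C` is symplectic
dual-containing iff `p₁q̄₁ - q₁p̄₁ ≡ 0`, `p₂q̄₂ - q₂p̄₂ ≡ 0` and
`p₁q̄₂ - q₁p̄₂ ≡ 0 mod (xⁿ - 1)`. -/
theorem twoGenQC_dualContaining_iff_poly
    {F : Type*} [Field F] [Fintype F] {n : ℕ} (hn : n ≠ 0)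
    (p₁ q₁ p₂ q₂ : AdjoinRoot (X ^ n - 1 : F[X]))
    (C : Submodule F ((Fin n ⊕ Fin n) → F))
    (hH : rowSpace (Matrix.fromBlocks
        (Matrix.circulant (toVecL hn p₁)) (Matrix.circulant (toVecL hn q₁))
        (Matrix.circulant (toVecL hn p₂)) (Matrix.circulant (toVecL hn q₂))) =
      sympDual C) :
    sympDual C ≤ C ↔
      p₁ * transposePoly hn q₁ - q₁ * transposePoly hn p₁ = 0 ∧
        p₂ * transposePoly hn q₂ - q₂ * transposePoly hn p₂ = 0 ∧
          p₁ * transposePoly hn q₂ - q₁ * transposePoly hn p₂ = 0 := by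
  have : NeZero n := ⟨hn⟩
  rw [aux_le_iff _ C hH, aux_zero_iff, aux_zero_iff, aux_zero_iff]
  have e1 : ∀ (A B D E : Matrix (Fin n) (Fin n) F) (i : Fin n),
      Matrix.fromBlocks A B D E (Sum.inl i) = Sum.elim (A i) (B i) := by
    intro A B D E i
    funext j
    cases j <;> rfl
  have e2 : ∀ (A B D E : Matrix (Fin n) (Fin n) F) (i : Fin n),
      Matrix.fromBlocks A B D E (Sum.inr i) = Sum.elim (D i) (E i) := by
    intro A B D E i
    funext j
    cases j <;> rfl
  constructor
  · intro h
    refine ⟨fun i k => ?_, fun i k => ?_, fun i k => ?_⟩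
    · simpa only [e1, e2] using h (Sum.inl i) (Sum.inl k)
    · simpa only [e1, e2] using h (Sum.inr i) (Sum.inr k)
    · simpa only [e1, e2] using h (Sum.inl i) (Sum.inr k)
  · rintro ⟨h1, h2, h3⟩ (i | i) (k | k)
    · rw [e1, e1]; exact h1 i k
    · rw [e1, e2]; exact h3 i k
    · rw [e1, e2, aux_neg, h3 k i, neg_zero]
    · rw [e2, e2]; exact h2 i k

end
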